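/- (Solution of the Strang splitting error recursion, equation (4.5) of the paper.) Let a : ℕ → ℝ be a sequence with a(n) ≥ 0 for all n and a(0) = 0, and let B > 0, T > 0, and 0 < τ ≤ 1 be real numbers. Assume that for every n ∈ ℕ with n · τ ≤ T one has a(n) ≤ B τ · ∑_{k=0}^{n−1} a(k) + B τ² · ∑_{k=1}^{n−1} 1/k + B τ². Then there exists a constant C > 0 depending only on B and T (one may take C = B · (2 + max(0, log T)) · exp(B T)) such that for every n ∈ ℕ with n · τ ≤ T, a(n) ≤ C · τ² · (1 + |log τ|). -/

import Mathlib

/-! The harmonic forcing term is monotone in `n`, so a discrete Grönwall inequality bounds `a n` by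
`B τ² (1 + H_{n-1}) (1 + B τ)ⁿ`. On the time interval `n τ ≤ T`, the power is at most `exp (B T)`,
while `H_{n-1} ≤ 1 + log n ≤ 1 + log⁺ T + |log τ|`. -/

open scoped Real

theorem le_mul_add_one_pow_of_le_mul_sum_add {R : Type*} [CommSemiring R] [PartialOrder R]
    [IsOrderedRing R] {a d : ℕ → R} {c : R} {n : ℕ} (hc : 0 ≤ c) (hd : Monotone d)
    (h : ∀ m ≤ n, a m ≤ c * ∑ k ∈ Finset.range m, a k + d m) :
    a n ≤ d n * (c + 1) ^ n := by
  induction n using Nat.strong_induction_on with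
  | _ n ih =>
    have hprev (k : ℕ) (hk : k ∈ Finset.range n) : a k ≤ d n * (c + 1) ^ k := by
      have hkn := (Finset.mem_range.mp hk).le
      calc a k ≤ d k * (c + 1) ^ k :=
            ih k (Finset.mem_range.mp hk) fun m hm => h m (hm.trans hkn)
        _ ≤ d n * (c + 1) ^ k :=
            mul_le_mul_of_nonneg_right (hd hkn) (pow_nonneg (add_nonneg hc zero_le_one) k)
    calc a n ≤ c * ∑ k ∈ Finset.range n, a k + d n := h n le_rfl
      _ ≤ c * ∑ k ∈ Finset.range n, d n * (c + 1) ^ k + d n := by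
          gcongr with k hk
          exact hprev k hk
      _ = d n * ((∑ k ∈ Finset.range n, (c + 1) ^ k) * c + 1) := by
          rw [← Finset.mul_sum]
          ring
      _ = d n * (c + 1) ^ n := by rw [geom_sum_mul_add]

theorem add_one_pow_le_exp_nat_mul {x : ℝ} (hx : -1 ≤ x) (n : ℕ) :
    (x + 1) ^ n ≤ Real.exp (n * x) := by
  rw [Real.exp_nat_mul]
  exact pow_le_pow_left₀ (neg_le_iff_add_nonneg.mp hx) (Real.add_one_le_exp x) n

theorem monotone_sum_Icc_one_div :
    Monotone fun n : ℕ => ∑ k ∈ Finset.Icc 1 n, (1 : ℝ) / k := fun _ _ hmn =>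
  Finset.sum_le_sum_of_subset_of_nonneg (Finset.Icc_subset_Icc_right hmn)
    fun _ _ _ => by positivity

theorem sum_Icc_one_div_le_one_add_log (n : ℕ) :
    ∑ k ∈ Finset.Icc 1 n, (1 : ℝ) / k ≤ 1 + Real.log n := by
  simpa only [harmonic_eq_sum_Icc, Rat.cast_sum, Rat.cast_inv, Rat.cast_natCast, one_div]
    using harmonic_le_one_add_log n

theorem posLog_le_posLog_add_abs_log_of_mul_le {x y z : ℝ} (hx : 0 ≤ x) (hy : 0 < y)
    (h : x * y ≤ z) : log⁺ x ≤ log⁺ z + |Real.log y| := by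
  have hinv : log⁺ y⁻¹ ≤ |Real.log y| := by
    rw [Real.posLog_apply, Real.log_inv]
    exact max_le (abs_nonneg _) (neg_le_abs _)
  calc log⁺ x = log⁺ (x * y * y⁻¹) := by rw [mul_inv_cancel_right₀ hy.ne']
    _ ≤ log⁺ (x * y) + log⁺ y⁻¹ := Real.posLog_mul
    _ ≤ log⁺ z + |Real.log y| :=
        add_le_add (Real.posLog_le_posLog (mul_nonneg hx hy.le) h) hinv

theorem sum_Icc_one_div_add_one_le_mul {n : ℕ} {T τ : ℝ} (hτ : 0 < τ) (hn : n * τ ≤ T) :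
    ∑ k ∈ Finset.Icc 1 n, (1 : ℝ) / k + 1 ≤ (2 + log⁺ T) * (1 + |Real.log τ|) := by
  have hlog : Real.log n ≤ log⁺ T + |Real.log τ| :=
    Real.log_of_nat_eq_posLog.symm.trans_le
      (posLog_le_posLog_add_abs_log_of_mul_le n.cast_nonneg hτ hn)
  have hcross : 0 ≤ log⁺ T * |Real.log τ| := mul_nonneg Real.posLog_nonneg (abs_nonneg _)
  linarith [sum_Icc_one_div_le_one_add_log n, abs_nonneg (Real.log τ)]

theorem strang_error_recursion_general {a : ℕ → ℝ} {B T τ : ℝ} (hB : 0 ≤ B) (hτ : 0 < τ)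
    (hrec : ∀ n : ℕ, (n : ℝ) * τ ≤ T →
      a n ≤ B * τ * (∑ k ∈ Finset.range n, a k)
            + B * τ ^ 2 * (∑ k ∈ Finset.Icc 1 (n - 1), (1 : ℝ) / k)
            + B * τ ^ 2)
    {n : ℕ} (hn : (n : ℝ) * τ ≤ T) :
    a n ≤ B * (2 + log⁺ T) * Real.exp (B * T) * τ ^ 2 * (1 + |Real.log τ|) := by
  let d (m : ℕ) : ℝ := B * τ ^ 2 * (∑ k ∈ Finset.Icc 1 (m - 1), (1 : ℝ) / k + 1)
  have hBτ : 0 ≤ B * τ := by positivity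
  have hd : Monotone d :=
    ((monotone_sum_Icc_one_div.comp fun _ _ hlk => Nat.sub_le_sub_right hlk 1).add_const
      1).const_mul (by positivity)
  have hle {m : ℕ} (hm : m ≤ n) : (m : ℝ) * τ ≤ T := le_trans (by gcongr) hn
  have hgronwall : a n ≤ d n * (B * τ + 1) ^ n :=
    le_mul_add_one_pow_of_le_mul_sum_add hBτ hd fun m hm =>
      (hrec m (hle hm)).trans_eq (by ring)
  have hforcing : d n ≤ B * τ ^ 2 * ((2 + log⁺ T) * (1 + |Real.log τ|)) :=
    mul_le_mul_of_nonneg_left (sum_Icc_one_div_add_one_le_mul hτ (hle (n.sub_le 1)))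
      (by positivity)
  have hgrowth : (B * τ + 1) ^ n ≤ Real.exp (B * T) :=
    calc (B * τ + 1) ^ n ≤ Real.exp (n * (B * τ)) :=
          add_one_pow_le_exp_nat_mul (by linarith) n
      _ = Real.exp (B * (n * τ)) := by rw [mul_left_comm]
      _ ≤ Real.exp (B * T) := by gcongr
  calc a n ≤ d n * (B * τ + 1) ^ n := hgronwall
    _ ≤ B * τ ^ 2 * ((2 + log⁺ T) * (1 + |Real.log τ|)) * Real.exp (B * T) := by
        have := Real.posLog_nonneg (x := T)
        gcongr
    _ = B * (2 + log⁺ T) * Real.exp (B * T) * τ ^ 2 * (1 + |Real.log τ|) := by ring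

/-- solution of the Strang splitting error recursion, eq. (4.5):
if `a 0 = 0`, `a n ≥ 0`, and `a n ≤ B τ ∑_{k<n} a k + B τ² ∑_{k=1}^{n−1} 1/k + B τ²`
whenever `n τ ≤ T`, then there is `C > 0` depending only on `B` and `T`
(one may take `C = B (2 + max 0 (log T)) exp(B T)`) such that
`a n ≤ C τ² (1 + |log τ|)` whenever `n τ ≤ T`. -/
theorem strang_error_recursion
    (a : ℕ → ℝ) (B T τ : ℝ)
    (ha_nonneg : ∀ n : ℕ, 0 ≤ a n) (ha0 : a 0 = 0)
    (hB : 0 < B) (hT : 0 < T) (hτ0 : 0 < τ) (hτ1 : τ ≤ 1)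
    (hrec : ∀ n : ℕ, (n : ℝ) * τ ≤ T →
      a n ≤ B * τ * (∑ k ∈ Finset.range n, a k)
            + B * τ ^ 2 * (∑ k ∈ Finset.Icc 1 (n - 1), (1 : ℝ) / k)
            + B * τ ^ 2) :
    ∃ C : ℝ, 0 < C ∧ C = B * (2 + max 0 (Real.log T)) * Real.exp (B * T) ∧
      ∀ n : ℕ, (n : ℝ) * τ ≤ T → a n ≤ C * τ ^ 2 * (1 + |Real.log τ|) :=
  ⟨_, by positivity, rfl, fun _ => strang_error_recursion_general hB.le hτ0 hrec⟩
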